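/- Let n ∈ ℕ, p⃗, q⃗ = (q_1,…,q_n) ∈ [1,∞]^n and α⃗ = (α_1,…,α_n) ∈ ℝⁿ with α_i ∈ (-1/q_i, 1 - 1/q_i) for every i ∈ {1,…,n}. Then the mixed-norm Herz space Ė^{α⃗,p⃗}_{q⃗}(ℝⁿ) is a ball Banach function space; in particular, its norm satisfies the triangle inequality ‖f+g‖ ≤ ‖f‖ + ‖g‖, and for every ball B ⊂ ℝⁿ there exists a positive constant C_B such that ∫_B |f(x)| dx ≤ C_B ‖f‖_{Ė^{α⃗,p⃗}_{q⃗}(ℝⁿ)} for all f ∈ Ė^{α⃗,p⃗}_{q⃗}(ℝⁿ). -/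

import Mathlib

open MeasureTheory ENNReal Filter

noncomputable section

/-- The dyadic annulus `R_k = (-2^k, 2^k) \ (-2^(k-1), 2^(k-1))` in `ℝ`. -/
def herzRing (k : ℤ) : Set ℝ :=
  Set.Ioo (-(2 : ℝ) ^ k) ((2 : ℝ) ^ k) \ Set.Ioo (-(2 : ℝ) ^ (k - 1)) ((2 : ℝ) ^ (k - 1))

/-- The `L^q` "norm" (valued in `ℝ≥0∞`) of an `ℝ≥0∞`-valued function on a set `s ⊆ ℝ`,
with the usual modification when `q = ∞`. -/
def lqNormOn (q : ℝ≥0∞) (s : Set ℝ) (g : ℝ → ℝ≥0∞) : ℝ≥0∞ :=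
  if q = ∞ then essSup (s.indicator g) volume
  else (∫⁻ x in s, g x ^ q.toReal) ^ (1 / q.toReal)

/-- The `l^p` norm over `ℤ` of an `ℝ≥0∞`-valued sequence, with the usual modification
when `p = ∞`. -/
def lpZNorm (p : ℝ≥0∞) (a : ℤ → ℝ≥0∞) : ℝ≥0∞ :=
  if p = ∞ then ⨆ k, a k
  else (∑' k : ℤ, a k ^ p.toReal) ^ (1 / p.toReal)

/-- The one-dimensional Herz norm `K^{α,p}_q` of an `ℝ≥0∞`-valued function on `ℝ`. -/
def herzNorm1 (α : ℝ) (p q : ℝ≥0∞) (g : ℝ → ℝ≥0∞) : ℝ≥0∞ :=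
  lpZNorm p fun k => ENNReal.ofReal ((2 : ℝ) ^ ((k : ℝ) * α)) * lqNormOn q (herzRing k) g

/-- The mixed-norm Herz norm on `ℝⁿ` of an `ℝ≥0∞`-valued function: the Herz norm
`K^{α_1,p_1}_{q_1}` is applied in the first variable, then `K^{α_2,p_2}_{q_2}` in the
second variable, …, and finally `K^{α_n,p_n}_{q_n}` in the last variable. -/
def mixedHerzNormE : (n : ℕ) → (Fin n → ℝ) → (Fin n → ℝ≥0∞) → (Fin n → ℝ≥0∞) →
    ((Fin n → ℝ) → ℝ≥0∞) → ℝ≥0∞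
  | 0, _, _, _, f => f fun i => i.elim0
  | n + 1, α, p, q, f =>
    herzNorm1 (α (Fin.last n)) (p (Fin.last n)) (q (Fin.last n)) fun xlast =>
      mixedHerzNormE n (Fin.init α) (Fin.init p) (Fin.init q) fun y => f (Fin.snoc y xlast)

/-- The mixed-norm Herz norm `‖f‖_{Ė^{α,p}_q(ℝⁿ)}` of a complex-valued function on `ℝⁿ`. -/
def herzNormC (n : ℕ) (α : Fin n → ℝ) (p q : Fin n → ℝ≥0∞) (f : (Fin n → ℝ) → ℂ) : ℝ≥0∞ :=
  mixedHerzNormE n α p q fun x => (‖f x‖₊ : ℝ≥0∞)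

/-- `I_m = (-2^m, -2^{-m}] ∪ [2^{-m}, 2^m)`. -/
def herzI (m : ℕ) : Set ℝ :=
  Set.Ioc (-(2 : ℝ) ^ (m : ℤ)) (-(2 : ℝ) ^ (-(m : ℤ))) ∪
    Set.Ico ((2 : ℝ) ^ (-(m : ℤ))) ((2 : ℝ) ^ (m : ℤ))

/-- `A_m = I_m^n ⊆ ℝⁿ`. -/
def herzA (n m : ℕ) : Set (Fin n → ℝ) := Set.univ.pi fun _ => herzI m

/-- The class `H(ℝⁿ)` of simple functions built from finitely many pairwise disjoint
parallelepipeds contained in some `A_m`. -/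
def IsHSimple (n : ℕ) (f : (Fin n → ℝ) → ℂ) : Prop :=
  ∃ (m N : ℕ) (a : Fin N → ℂ) (E : Fin N → Fin n → Set ℝ),
    (∀ k i, MeasurableSet (E k i)) ∧
    (∀ k, Set.univ.pi (E k) ⊆ herzA n m) ∧
    (Pairwise fun k l => Disjoint (Set.univ.pi (E k)) (Set.univ.pi (E l))) ∧
    f = fun x => ∑ k, (Set.univ.pi (E k)).indicator (fun _ => a k) x

/-- The Euclidean ball `B(x,r)` in `ℝⁿ`. -/
def eucBall (n : ℕ) (x : Fin n → ℝ) (r : ℝ) : Set (Fin n → ℝ) :=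
  {y | ∑ i, (y i - x i) ^ 2 < r ^ 2}

/-- The (uncentered) maximal operator in the `k`-th variable. -/
def maxVar (n : ℕ) (k : Fin n) (g : (Fin n → ℝ) → ℝ≥0∞) : (Fin n → ℝ) → ℝ≥0∞ :=
  fun x => ⨆ (a : ℝ) (b : ℝ) (_ : x k ∈ Set.Ioo a b),
    (volume (Set.Ioo a b))⁻¹ * ∫⁻ y in Set.Ioo a b, g (Function.update x k y)

/-- The centered Hardy–Littlewood maximal operator on `ℝⁿ`. -/
def centeredMax (n : ℕ) (g : (Fin n → ℝ) → ℝ≥0∞) : (Fin n → ℝ) → ℝ≥0∞ :=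
  fun x => ⨆ (r : ℝ) (_ : 0 < r),
    (volume (eucBall n x r))⁻¹ * ∫⁻ y in eucBall n x r, g y

/-- The composition `M_n ∘ ⋯ ∘ M_1` of the maximal operators in each variable. -/
def iteratedMax (n : ℕ) (g : (Fin n → ℝ) → ℝ≥0∞) : (Fin n → ℝ) → ℝ≥0∞ :=
  (List.ofFn fun k : Fin n => maxVar n k).foldl (fun h F => F h) g

/-- The iterated maximal operator `ℳ_t(f) = [M_n ⋯ M_1(|f|^t)]^{1/t}`. -/
def iterMaxPow (n : ℕ) (t : ℝ) (f : (Fin n → ℝ) → ℂ) : (Fin n → ℝ) → ℝ≥0∞ :=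
  fun x => iteratedMax n (fun y => (‖f y‖₊ : ℝ≥0∞) ^ t) x ^ (1 / t)

/-- The `l^r`-Herz type mixed norm of a sequence of functions on `ℝⁿ`. -/
def herzSeqNorm (n : ℕ) (r : ℝ≥0∞) (α : Fin n → ℝ) (p q : Fin n → ℝ≥0∞)
    (F : ℤ → (Fin n → ℝ) → ℂ) : ℝ≥0∞ :=
  mixedHerzNormE n α p q fun x => lpZNorm r fun j => (‖F j x‖₊ : ℝ≥0∞)

/-- `N` is a ball quasi-Banach function norm on (nonnegative extended-real-valued)
measurable functions on `ℝⁿ`. -/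
def IsBQBFNorm (n : ℕ) (N : ((Fin n → ℝ) → ℝ≥0∞) → ℝ≥0∞) : Prop :=
  (∀ f : (Fin n → ℝ) → ℝ≥0∞, Measurable f → N f = 0 → f =ᵐ[volume] 0) ∧
  (∀ f g : (Fin n → ℝ) → ℝ≥0∞, Measurable f → Measurable g →
    (∀ᵐ x ∂volume, g x ≤ f x) → N g ≤ N f) ∧
  (∀ (fm : ℕ → (Fin n → ℝ) → ℝ≥0∞) (f : (Fin n → ℝ) → ℝ≥0∞),
    (∀ m, Measurable (fm m)) → Measurable f →
    (∀ᵐ x ∂volume, Monotone (fun m => fm m x) ∧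
      Tendsto (fun m => fm m x) atTop (nhds (f x))) →
    Monotone (fun m => N (fm m)) ∧ Tendsto (fun m => N (fm m)) atTop (nhds (N f))) ∧
  (∀ (x : Fin n → ℝ) (r : ℝ), 0 < r →
    N ((eucBall n x r).indicator fun _ => (1 : ℝ≥0∞)) ≠ ∞)

/-- `N` is a ball Banach function norm: a ball quasi-Banach function norm that moreover
satisfies the triangle inequality and locally dominates the `L¹` norm. -/
def IsBallBanachNorm (n : ℕ) (N : ((Fin n → ℝ) → ℝ≥0∞) → ℝ≥0∞) : Prop :=
  IsBQBFNorm n N ∧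
  (∀ f g : (Fin n → ℝ) → ℝ≥0∞, Measurable f → Measurable g → N (f + g) ≤ N f + N g) ∧
  (∀ (x : Fin n → ℝ) (r : ℝ), 0 < r → ∃ C : ℝ≥0∞, 0 < C ∧ C ≠ ∞ ∧
    ∀ f : (Fin n → ℝ) → ℝ≥0∞, Measurable f → (∫⁻ y in eucBall n x r, f y) ≤ C * N f)

/-- The associate (Köthe dual) norm of a function norm `N`. -/
def assocNormOf (n : ℕ) (N : ((Fin n → ℝ) → ℝ≥0∞) → ℝ≥0∞)
    (f : (Fin n → ℝ) → ℝ≥0∞) : ℝ≥0∞ :=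
  ⨆ (g : (Fin n → ℝ) → ℝ≥0∞) (_ : Measurable g) (_ : N g = 1), ∫⁻ x, f x * g x

/-- The `θ`-convexification of a function norm: `‖f‖_{X^θ} = ‖|f|^θ‖_X^{1/θ}`
(here stated with `θ` in place of `1/p`, so `X^{1/p}` is `convexPow n (1/p) N`). -/
def convexPow (n : ℕ) (θ : ℝ) (N : ((Fin n → ℝ) → ℝ≥0∞) → ℝ≥0∞)
    (f : (Fin n → ℝ) → ℝ≥0∞) : ℝ≥0∞ :=
  N (fun x => f x ^ θ) ^ (1 / θ)

/-- The associate space norm of the mixed-norm Herz space, for complex-valued functions. -/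
def herzAssocNormC (n : ℕ) (α : Fin n → ℝ) (p q : Fin n → ℝ≥0∞)
    (f : (Fin n → ℝ) → ℂ) : ℝ≥0∞ :=
  ⨆ (g : (Fin n → ℝ) → ℂ) (_ : Measurable g) (_ : herzNormC n α p q g = 1),
    ∫⁻ x, (‖f x * g x‖₊ : ℝ≥0∞)

/-!
Banach function norms (monotone, subadditive, homogeneous, with the Fatou property) are stable under
weighted `ℓ^p` sums and under iteration. Since the rings `R_k` decompose `ℝ ∖ {0}`, the Herz norm is
an `ℓ^p` sum of weighted `L^q(R_k)` norms, and the mixed Herz norm is an iteration of these.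

For the two local conditions, `|R_k| = 2^k` gives `‖1_{R_k}‖ ≤ 2^{k(α + 1/q)}`, while Hölder's
inequality gives `∫_{R_k} |g| ≤ 2^{k(1 - 1/q - α)} ‖g‖`. Summing over the rings `R_k`, `k ≤ K`, that
make up `(-2^K, 2^K)`, both geometric series converge exactly when `-1/q < α < 1 - 1/q`. Both
conditions pass to products, hence to cubes, and every ball lies in a cube.
-/

universe u

variable {X Y : Type u} [MeasurableSpace X] [MeasurableSpace Y] {μ : Measure X} {ν : Measure Y}

/-- A Banach function norm on the nonnegative measurable functions on `X`, without the conditions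
on sets of finite measure. The field `measurable_slice` is not one of the classical axioms: it
makes norms iterable. The parameter spaces it ranges over live in the universe of `X`. -/
structure IsFunctionNorm (μ : Measure X) (N : (X → ℝ≥0∞) → ℝ≥0∞) : Prop where
  eq_zero_iff {f : X → ℝ≥0∞} : Measurable f → (N f = 0 ↔ f =ᵐ[μ] 0)
  mono {f g : X → ℝ≥0∞} : f ≤ᵐ[μ] g → N f ≤ N g
  map_const_mul (c : ℝ≥0∞) {f : X → ℝ≥0∞} : Measurable f → N (fun x => c * f x) = c * N f
  map_add_le {f g : X → ℝ≥0∞} : Measurable f → Measurable g →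
    N (fun x => f x + g x) ≤ N f + N g
  map_iSup {f : ℕ → X → ℝ≥0∞} : (∀ m, Measurable (f m)) → Monotone f →
    N (fun x => ⨆ m, f m x) = ⨆ m, N (f m)
  measurable_slice {β : Type u} [MeasurableSpace β] {F : β × X → ℝ≥0∞} :
    Measurable F → Measurable fun b => N fun x => F (b, x)

namespace IsFunctionNorm

variable {N : (X → ℝ≥0∞) → ℝ≥0∞}

lemma map_zero (hN : IsFunctionNorm μ N) : N (fun _ => 0) = 0 :=
  (hN.eq_zero_iff measurable_const).2 .rfl

lemma map_sum_le (hN : IsFunctionNorm μ N) {ι : Type*} {f : ι → X → ℝ≥0∞}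
    (hf : ∀ i, Measurable (f i)) (s : Finset ι) :
    N (fun x => ∑ i ∈ s, f i x) ≤ ∑ i ∈ s, N (f i) := by
  induction s using Finset.cons_induction with
  | empty => simp [hN.map_zero]
  | cons i s his ih =>
    simp only [Finset.sum_cons]
    exact (hN.map_add_le (hf i) (by fun_prop)).trans (by gcongr)

lemma map_tsum_le (hN : IsFunctionNorm μ N) {f : ℕ → X → ℝ≥0∞} (hf : ∀ j, Measurable (f j)) :
    N (fun x => ∑' j, f j x) ≤ ∑' j, N (f j) := by
  simp only [ENNReal.tsum_eq_iSup_nat]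
  rw [hN.map_iSup (fun n => by fun_prop) fun m n hmn x =>
    Finset.sum_le_sum_of_subset (Finset.range_mono hmn)]
  exact iSup_mono fun n => hN.map_sum_le hf (Finset.range n)

/-- The functions are only a.e. monotone; replacing them by their running suprema does not change
any of the norms. -/
lemma map_eq_iSup_of_ae_monotone (hN : IsFunctionNorm μ N) {f : ℕ → X → ℝ≥0∞}
    {g : X → ℝ≥0∞} (hf : ∀ m, Measurable (f m))
    (hfg : ∀ᵐ x ∂μ, Monotone (fun m => f m x) ∧ Tendsto (fun m => f m x) atTop (nhds (g x))) :
    N g = ⨆ m, N (f m) := by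
  have hF (m : ℕ) : N (partialSups f m) = N (f m) := by
    have h : partialSups f m =ᵐ[μ] f m := hfg.mono fun x hx => by
      rw [Pi.partialSups_apply, hx.1.partialSups_eq]
    exact (hN.mono h.le).antisymm (hN.mono h.symm.le)
  have hg : g =ᵐ[μ] fun x => ⨆ m, partialSups f m x := hfg.mono fun x hx => by
    simp only [Pi.partialSups_apply, hx.1.partialSups_eq]
    exact tendsto_nhds_unique hx.2 (tendsto_atTop_iSup hx.1)
  have hF_meas (m : ℕ) : Measurable (partialSups f m) := by
    induction m with
    | zero => simpa using hf 0
    | succ m ih => rw [partialSups_add_one]; exact ih.sup (hf _)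
  calc
    N g = N (fun x => ⨆ m, partialSups f m x) := (hN.mono hg.le).antisymm (hN.mono hg.symm.le)
    _ = ⨆ m, N (partialSups f m) := hN.map_iSup hF_meas (partialSups_monotone f)
    _ = ⨆ m, N (f m) := by simp only [hF]

lemma const_mul (hN : IsFunctionNorm μ N) {c : ℝ≥0∞} (hc : c ≠ 0) :
    IsFunctionNorm μ fun f => c * N f where
  eq_zero_iff hf := by rw [mul_eq_zero, or_iff_right hc, hN.eq_zero_iff hf]
  mono h := by gcongr; exact hN.mono h
  map_const_mul a f hf := by rw [hN.map_const_mul a hf, mul_left_comm]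
  map_add_le hf hg := by rw [← mul_add]; gcongr; exact hN.map_add_le hf hg
  map_iSup hf hf' := by rw [hN.map_iSup hf hf', ENNReal.mul_iSup]
  measurable_slice hF := (hN.measurable_slice hF).const_mul c

lemma sum {ι : Type u} [Countable ι] [MeasurableSpace ι] [MeasurableSingletonClass ι]
    {M : (ι → ℝ≥0∞) → ℝ≥0∞} {μ : ι → Measure X} {N : ι → (X → ℝ≥0∞) → ℝ≥0∞}
    (hM : IsFunctionNorm Measure.count M) (hN : ∀ i, IsFunctionNorm (μ i) (N i)) :
    IsFunctionNorm (Measure.sum μ) fun f => M fun i => N i f where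
  eq_zero_iff {f} hf := by
    simp only [hM.eq_zero_iff (measurable_of_countable _), EventuallyEq, Measure.ae_count_iff,
      Pi.zero_apply, Measure.ae_sum_iff, (hN _).eq_zero_iff hf]
  mono h := hM.mono (ae_of_all _ fun i => (hN i).mono (Measure.ae_sum_iff.1 h i))
  map_const_mul c f hf := by
    simp only [(hN _).map_const_mul c hf, hM.map_const_mul c (measurable_of_countable _)]
  map_add_le hf hg :=
    (hM.mono (ae_of_all _ fun i => (hN i).map_add_le hf hg)).trans
      (hM.map_add_le (measurable_of_countable _) (measurable_of_countable _))
  map_iSup {f} hf hf' := by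
    simp only [(hN _).map_iSup hf hf']
    exact hM.map_iSup (fun _ => measurable_of_countable _)
      fun m n hmn i => (hN i).mono (ae_of_all _ (hf' hmn))
  measurable_slice {β _ F} hF :=
    hM.measurable_slice (F := fun z => N z.2 fun x => F (z.1, x)) <|
      measurable_from_prod_countable_left fun i => (hN i).measurable_slice hF

lemma comp_measurePreserving {N : (Y → ℝ≥0∞) → ℝ≥0∞} (hN : IsFunctionNorm ν N) {φ : Y → X}
    (hφ : MeasurePreserving φ ν μ) : IsFunctionNorm μ fun f => N (f ∘ φ) where
  eq_zero_iff {f} hf := by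
    rw [hN.eq_zero_iff (hf.comp hφ.measurable), ← hφ.map_eq]
    exact (ae_map_iff hφ.aemeasurable (hf (measurableSet_singleton 0))).symm
  mono h := hN.mono (hφ.quasiMeasurePreserving.ae h)
  map_const_mul c f hf := hN.map_const_mul c (hf.comp hφ.measurable)
  map_add_le hf hg := hN.map_add_le (hf.comp hφ.measurable) (hg.comp hφ.measurable)
  map_iSup hf hf' := hN.map_iSup (fun m => (hf m).comp hφ.measurable) fun _ _ hmn y => hf' hmn (φ y)
  measurable_slice hF := hN.measurable_slice (hF.comp (measurable_id.prodMap hφ.measurable))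

end IsFunctionNorm

/-- The mixed norm on `Y × X` which applies `N` in the variable `x : X` first and then `M` in the
variable `y : Y`. -/
def iteratedNorm (M : (Y → ℝ≥0∞) → ℝ≥0∞) (N : (X → ℝ≥0∞) → ℝ≥0∞) (f : Y × X → ℝ≥0∞) : ℝ≥0∞ :=
  M fun y => N fun x => f (y, x)

namespace IsFunctionNorm

lemma iterated [SFinite μ] {M : (Y → ℝ≥0∞) → ℝ≥0∞} {N : (X → ℝ≥0∞) → ℝ≥0∞}
    (hM : IsFunctionNorm ν M) (hN : IsFunctionNorm μ N) :
    IsFunctionNorm (ν.prod μ) (iteratedNorm M N) where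
  eq_zero_iff {f} hf := by
    have h_slice (y : Y) : N (fun x => f (y, x)) = 0 ↔ ∀ᵐ x ∂μ, f (y, x) = 0 :=
      hN.eq_zero_iff (by fun_prop)
    rw [iteratedNorm, hM.eq_zero_iff (hN.measurable_slice hf)]
    simp only [EventuallyEq, Pi.zero_apply, h_slice]
    exact (Measure.ae_prod_iff_ae_ae (hf (measurableSet_singleton 0))).symm
  mono h := hM.mono ((Measure.ae_ae_of_ae_prod h).mono fun _ hy => hN.mono hy)
  map_const_mul c f hf := by
    simp only [iteratedNorm]
    rw [← hM.map_const_mul c (hN.measurable_slice hf)]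
    congr! 2 with y
    exact hN.map_const_mul c (by fun_prop)
  map_add_le hf hg :=
    (hM.mono (ae_of_all _ fun y => hN.map_add_le (by fun_prop) (by fun_prop))).trans
      (hM.map_add_le (hN.measurable_slice hf) (hN.measurable_slice hg))
  map_iSup {f} hf hf' := by
    simp only [iteratedNorm]
    rw [← hM.map_iSup (fun m => hN.measurable_slice (hf m))
      fun m n hmn y => hN.mono (ae_of_all _ fun x => hf' hmn (y, x))]
    congr! 2 with y
    exact hN.map_iSup (fun m => by fun_prop) fun m n hmn x => hf' hmn (y, x)
  measurable_slice hF :=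
    hM.measurable_slice (hN.measurable_slice (hF.comp MeasurableEquiv.prodAssoc.measurable))

end IsFunctionNorm

lemma isFunctionNorm_eval [MeasurableSingletonClass X] (a : X) :
    IsFunctionNorm (Measure.dirac a) fun f => f a where
  eq_zero_iff _ := by simp [EventuallyEq]
  mono h := by simpa [EventuallyLE] using h
  map_const_mul _ _ _ := rfl
  map_add_le _ _ := le_rfl
  map_iSup _ _ := rfl
  measurable_slice hF := hF.comp measurable_prodMk_right

lemma measurable_essSup_slice {β : Type*} [MeasurableSpace β] [SFinite μ] {F : β × X → ℝ≥0∞}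
    (hF : Measurable F) : Measurable fun b => essSup (fun x => F (b, x)) μ := by
  refine measurable_of_Iic fun c => ?_
  have h_preimage : (fun b => essSup (fun x => F (b, x)) μ) ⁻¹' Set.Iic c =
      {b | μ (Prod.mk b ⁻¹' {z | c < F z}) = 0} := by
    ext b
    have h_le : essSup (fun x => F (b, x)) μ ≤ c ↔ ∀ᵐ x ∂μ, F (b, x) ≤ c :=
      ⟨fun h => (ENNReal.ae_le_essSup _).mono fun _ hx => hx.trans h, essSup_le_of_ae_le c⟩
    simp [h_le, ae_iff]
  rw [h_preimage]
  exact measurable_measure_prodMk_left (measurableSet_lt measurable_const hF)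
    (measurableSet_singleton 0)

lemma eLpNorm_eq_lintegral_rpow {q : ℝ≥0∞} (hq₀ : q ≠ 0) (hq : q ≠ ∞) (f : X → ℝ≥0∞) :
    eLpNorm f q μ = (∫⁻ x, f x ^ q.toReal ∂μ) ^ (1 / q.toReal) := by
  simp only [eLpNorm_eq_lintegral_rpow_enorm_toReal hq₀ hq, enorm_eq_self]

lemma eLpNorm_top_eq_essSup (f : X → ℝ≥0∞) : eLpNorm f ∞ μ = essSup f μ := by
  simp only [eLpNorm_exponent_top, eLpNormEssSup, enorm_eq_self]

lemma iSup_rpow {ι : Type*} (a : ι → ℝ≥0∞) {t : ℝ} (ht : 0 < t) :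
    (⨆ i, a i) ^ t = ⨆ i, a i ^ t :=
  (ENNReal.orderIsoRpow t ht).map_iSup a

lemma essSup_iSup {ι : Type*} [Countable ι] (f : ι → X → ℝ≥0∞) :
    essSup (fun x => ⨆ i, f i x) μ = ⨆ i, essSup (f i) μ := by
  refine le_antisymm (essSup_le_of_ae_le _ ?_)
    (iSup_le fun i => essSup_mono_ae (ae_of_all _ fun x => le_iSup (fun i => f i x) i))
  filter_upwards [ae_all_iff.2 fun i => ENNReal.ae_le_essSup (μ := μ) (f i)] with x hx
  exact iSup_mono hx

lemma eLpNorm_const_mul {q : ℝ≥0∞} (hq : q ≠ 0) (c : ℝ≥0∞) {f : X → ℝ≥0∞} (hf : Measurable f) :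
    eLpNorm (fun x => c * f x) q μ = c * eLpNorm f q μ := by
  obtain rfl | hq_top := eq_or_ne q ∞
  · simp only [eLpNorm_top_eq_essSup, ENNReal.essSup_const_mul]
  have hq_pos : 0 < q.toReal := ENNReal.toReal_pos hq hq_top
  simp only [eLpNorm_eq_lintegral_rpow hq hq_top, ENNReal.mul_rpow_of_nonneg _ _ hq_pos.le]
  rw [lintegral_const_mul _ (by fun_prop), ENNReal.mul_rpow_of_nonneg _ _ (by positivity),
    one_div, ENNReal.rpow_rpow_inv hq_pos.ne']

lemma eLpNorm_iSup {q : ℝ≥0∞} (hq : q ≠ 0) {f : ℕ → X → ℝ≥0∞} (hf : ∀ m, Measurable (f m))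
    (hf_mono : Monotone f) : eLpNorm (fun x => ⨆ m, f m x) q μ = ⨆ m, eLpNorm (f m) q μ := by
  obtain rfl | hq_top := eq_or_ne q ∞
  · simp only [eLpNorm_top_eq_essSup, essSup_iSup]
  have hq_pos : 0 < q.toReal := ENNReal.toReal_pos hq hq_top
  simp only [eLpNorm_eq_lintegral_rpow hq hq_top, iSup_rpow _ hq_pos]
  rw [lintegral_iSup (fun m => (hf m).pow_const _)
    fun m n hmn x => ENNReal.rpow_le_rpow (hf_mono hmn x) hq_pos.le, iSup_rpow _ (by positivity)]

lemma measurable_eLpNorm_slice {β : Type*} [MeasurableSpace β] [SFinite μ] {q : ℝ≥0∞}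
    (hq : q ≠ 0) {F : β × X → ℝ≥0∞} (hF : Measurable F) :
    Measurable fun b => eLpNorm (fun x => F (b, x)) q μ := by
  obtain rfl | hq_top := eq_or_ne q ∞
  · simpa only [eLpNorm_top_eq_essSup] using measurable_essSup_slice hF
  simp only [eLpNorm_eq_lintegral_rpow hq hq_top]
  exact (hF.pow_const _).lintegral_prod_right'.pow_const _

lemma isFunctionNorm_eLpNorm [SFinite μ] {q : ℝ≥0∞} (hq : 1 ≤ q) :
    IsFunctionNorm μ fun f => eLpNorm f q μ :=
  have hq₀ : q ≠ 0 := (one_pos.trans_le hq).ne'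
  { eq_zero_iff := fun hf => eLpNorm_eq_zero_iff hf.aestronglyMeasurable hq₀
    mono := fun h => eLpNorm_mono_enorm_ae h
    map_const_mul := fun c _ => eLpNorm_const_mul hq₀ c
    map_add_le := fun hf hg =>
      eLpNorm_add_le hf.aestronglyMeasurable hg.aestronglyMeasurable hq
    map_iSup := eLpNorm_iSup hq₀
    measurable_slice := measurable_eLpNorm_slice hq₀ }

/-- The local axioms of a Banach function norm `N` on the set `s`: the indicator of `s` has finite
norm, and `N` dominates the `L¹` norm over `s`. -/
structure IsAdmissibleSet (N : (X → ℝ≥0∞) → ℝ≥0∞) (μ : Measure X) (s : Set X) : Prop where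
  indicator_ne_top : N (s.indicator 1) ≠ ∞
  exists_setLIntegral_le : ∃ C : NNReal, ∀ f, Measurable f → ∫⁻ x in s, f x ∂μ ≤ C * N f

namespace IsAdmissibleSet

variable {N : (X → ℝ≥0∞) → ℝ≥0∞} {s t : Set X}

lemma subset (ht : IsAdmissibleSet N μ t) (hN : IsFunctionNorm μ N) (hst : s ⊆ t) :
    IsAdmissibleSet N μ s where
  indicator_ne_top := ne_top_of_le_ne_top ht.indicator_ne_top <|
    hN.mono (ae_of_all _ (Set.indicator_le_indicator_of_subset hst fun _ => zero_le))
  exists_setLIntegral_le :=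
    ht.exists_setLIntegral_le.imp fun _ hC f hf => (lintegral_mono_set hst).trans (hC f hf)

lemma comp_measurePreserving {N : (Y → ℝ≥0∞) → ℝ≥0∞} {φ : Y → X}
    (hs : IsAdmissibleSet N ν (φ ⁻¹' s)) (hφ : MeasurePreserving φ ν μ)
    (hs_meas : MeasurableSet s) : IsAdmissibleSet (fun f => N (f ∘ φ)) μ s where
  indicator_ne_top := hs.indicator_ne_top
  exists_setLIntegral_le := hs.exists_setLIntegral_le.imp fun _ hC f hf => by
    rw [← hφ.setLIntegral_comp_preimage hs_meas hf]
    exact hC _ (hf.comp hφ.measurable)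

lemma prod [SFinite μ] [SFinite ν] {M : (Y → ℝ≥0∞) → ℝ≥0∞} {s : Set Y} {t : Set X}
    (hM : IsFunctionNorm ν M) (hN : IsFunctionNorm μ N) (hs : IsAdmissibleSet M ν s)
    (ht : IsAdmissibleSet N μ t) (hs_meas : MeasurableSet s) (ht_meas : MeasurableSet t) :
    IsAdmissibleSet (iteratedNorm M N) (ν.prod μ) (s ×ˢ t) where
  indicator_ne_top := by
    have h_slice (y : Y) : N (fun x => (s ×ˢ t).indicator 1 (y, x)) =
        N (t.indicator 1) * s.indicator 1 y := by
      rw [mul_comm, ← hN.map_const_mul _ (measurable_one.indicator ht_meas)]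
      simp only [Set.indicator_prod_one]
    simp only [iteratedNorm, h_slice]
    rw [hM.map_const_mul _ (measurable_one.indicator hs_meas)]
    exact ENNReal.mul_ne_top ht.indicator_ne_top hs.indicator_ne_top
  exists_setLIntegral_le := by
    obtain ⟨C, hC⟩ := hs.exists_setLIntegral_le
    obtain ⟨D, hD⟩ := ht.exists_setLIntegral_le
    refine ⟨D * C, fun f hf => ?_⟩
    have hf_slice : Measurable fun y => N fun x => f (y, x) := hN.measurable_slice hf
    calc
      ∫⁻ z in s ×ˢ t, f z ∂ν.prod μ = ∫⁻ y in s, ∫⁻ x in t, f (y, x) ∂μ ∂ν := by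
        rw [← Measure.prod_restrict, lintegral_prod _ hf.aemeasurable]
      _ ≤ ∫⁻ y in s, D * N (fun x => f (y, x)) ∂ν :=
        lintegral_mono fun y => hD _ (by fun_prop)
      _ = D * ∫⁻ y in s, N (fun x => f (y, x)) ∂ν := lintegral_const_mul _ hf_slice
      _ ≤ D * (C * iteratedNorm M N f) := by gcongr; exact hC _ hf_slice
      _ = ↑(D * C) * iteratedNorm M N f := by rw [coe_mul, mul_assoc]

lemma of_ae_le_iUnion (hN : IsFunctionNorm μ N) {t : ℕ → Set X}
    (ht : ∀ j, MeasurableSet (t j)) (hst : s ≤ᵐ[μ] ⋃ j, t j)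
    (h_ind : ∑' j, N ((t j).indicator 1) ≠ ∞) {C : ℕ → ℝ≥0∞} (hC : ∑' j, C j ≠ ∞)
    (h_le : ∀ j f, Measurable f → ∫⁻ x in t j, f x ∂μ ≤ C j * N f) : IsAdmissibleSet N μ s where
  indicator_ne_top := by
    have h_le_tsum : s.indicator 1 ≤ᵐ[μ] fun x => ∑' j, (t j).indicator (1 : X → ℝ≥0∞) x := by
      filter_upwards [hst] with x hx
      refine Set.indicator_apply_le' (fun hxs => ?_) fun _ => zero_le
      obtain ⟨j, hj⟩ := Set.mem_iUnion.1 (hx hxs)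
      exact (Set.indicator_of_mem hj 1).ge.trans (ENNReal.le_tsum j)
    exact ne_top_of_le_ne_top h_ind <| (hN.mono h_le_tsum).trans <|
      hN.map_tsum_le fun j => measurable_one.indicator (ht j)
  exists_setLIntegral_le := by
    refine ⟨(∑' j, C j).toNNReal, fun f hf => ?_⟩
    calc
      ∫⁻ x in s, f x ∂μ ≤ ∫⁻ x in ⋃ j, t j, f x ∂μ := lintegral_mono_set' hst
      _ ≤ ∑' j, ∫⁻ x in t j, f x ∂μ := lintegral_iUnion_le _ _
      _ ≤ ∑' j, C j * N f := ENNReal.tsum_le_tsum fun j => h_le j f hf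
      _ = (∑' j, C j).toNNReal * N f := by rw [ENNReal.tsum_mul_right, coe_toNNReal hC]

end IsAdmissibleSet

lemma isAdmissibleSet_eval (a : X) (s : Set X) :
    IsAdmissibleSet (fun f => f a) (Measure.dirac a) s where
  indicator_ne_top := ne_top_of_le_ne_top one_ne_top (Set.indicator_le_self s 1 a)
  exists_setLIntegral_le := 
    ⟨1, fun f hf => (setLIntegral_le_lintegral s f).trans (by simp [lintegral_dirac' a hf])⟩

lemma IsFunctionNorm.isBallBanachNorm {n : ℕ} {N : ((Fin n → ℝ) → ℝ≥0∞) → ℝ≥0∞}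
    (hN : IsFunctionNorm volume N)
    (h_ball : ∀ x r, 0 < r → IsAdmissibleSet N volume (eucBall n x r)) :
    IsBallBanachNorm n N := by
  refine ⟨⟨fun f hf => (hN.eq_zero_iff hf).1, fun f g _ _ h => hN.mono h,
    fun f g hf _ hfg => ?_, fun x r hr => (h_ball x r hr).indicator_ne_top⟩,
    fun f g hf hg => hN.map_add_le hf hg, fun x r hr => ?_⟩
  · have h_mono : Monotone fun m => N (f m) :=
      fun _ _ hkm => hN.mono (hfg.mono fun _ hx => hx.1 hkm)
    refine ⟨h_mono, ?_⟩
    rw [hN.map_eq_iSup_of_ae_monotone hf hfg]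
    exact tendsto_atTop_iSup h_mono
  · obtain ⟨C, hC⟩ := (h_ball x r hr).exists_setLIntegral_le
    refine ⟨C + 1, by positivity, by simp, fun f hf => (hC f hf).trans ?_⟩
    gcongr
    exact le_self_add

lemma mem_herzRing {k : ℤ} {x : ℝ} : x ∈ herzRing k ↔ (2 : ℝ) ^ (k - 1) ≤ |x| ∧ |x| < 2 ^ k := by
  rw [herzRing, Set.mem_sdiff, Set.mem_Ioo, Set.mem_Ioo, ← abs_lt, ← abs_lt, not_lt, and_comm]

lemma measurableSet_herzRing (k : ℤ) : MeasurableSet (herzRing k) :=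
  measurableSet_Ioo.diff measurableSet_Ioo

lemma pairwise_disjoint_herzRing : Pairwise (Function.onFun Disjoint herzRing) := by
  refine (pairwise_disjoint_on herzRing).2 fun j k hjk => ?_
  refine Set.disjoint_left.2 fun x hj hk => ?_
  have h_le : (2 : ℝ) ^ j ≤ 2 ^ (k - 1) := zpow_le_zpow_right₀ one_le_two (by lia)
  linarith [(mem_herzRing.1 hj).2, (mem_herzRing.1 hk).1]

lemma iUnion_herzRing : ⋃ k, herzRing k = {0}ᶜ := by
  ext x
  simp only [Set.mem_iUnion, mem_herzRing, Set.mem_compl_singleton_iff]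
  constructor
  · rintro ⟨k, hk, -⟩
    exact abs_pos.1 ((by positivity : (0 : ℝ) < 2 ^ (k - 1)).trans_le hk)
  · intro hx
    obtain ⟨k, hk⟩ := exists_mem_Ico_zpow (abs_pos.2 hx) (one_lt_two (α := ℝ))
    exact ⟨k + 1, by simpa using hk⟩

lemma sum_restrict_herzRing :
    Measure.sum (fun k => (volume : Measure ℝ).restrict (herzRing k)) = volume := by
  rw [← Measure.restrict_iUnion pairwise_disjoint_herzRing measurableSet_herzRing,
    iUnion_herzRing, restrict_compl_singleton]

lemma volume_herzRing (k : ℤ) : volume (herzRing k) = 2 ^ (k : ℝ) := by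
  have h_subset : Set.Ioo (-(2 : ℝ) ^ (k - 1)) (2 ^ (k - 1)) ⊆ Set.Ioo (-(2 : ℝ) ^ k) (2 ^ k) := by
    have h_le : (2 : ℝ) ^ (k - 1) ≤ 2 ^ k := zpow_le_zpow_right₀ one_le_two (by lia)
    exact Set.Ioo_subset_Ioo (neg_le_neg h_le) h_le
  rw [herzRing, measure_sdiff h_subset measurableSet_Ioo.nullMeasurableSet (by simp),
    Real.volume_Ioo, Real.volume_Ioo, ← ENNReal.ofReal_sub _ (by rw [sub_neg_eq_add]; positivity),
    ← ENNReal.ofReal_ofNat 2, ENNReal.ofReal_rpow_of_pos two_pos, Real.rpow_intCast,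
    zpow_sub_one₀ two_ne_zero]
  congr 1
  ring

lemma Ioo_two_zpow_ae_le_iUnion_herzRing (K : ℤ) :
    Set.Ioo (-(2 : ℝ) ^ K) (2 ^ K) ≤ᵐ[volume] ⋃ j : ℕ, herzRing (K - j) := by
  filter_upwards [compl_mem_ae_iff.2 (measure_singleton (0 : ℝ))] with x hx₀ hx
  obtain ⟨k, hk⟩ := Set.mem_iUnion.1 (iUnion_herzRing ▸ hx₀)
  have hkK : k - 1 < K := (zpow_lt_zpow_iff_right₀ (one_lt_two (α := ℝ))).1 <|
    (mem_herzRing.1 hk).1.trans_lt (abs_lt.2 hx)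
  exact Set.mem_iUnion.2 ⟨(K - k).toNat, by rwa [show K - (K - k).toNat = k by lia]⟩

lemma lqNormOn_eq_eLpNorm {q : ℝ≥0∞} (hq : q ≠ 0) {s : Set ℝ} (hs : MeasurableSet s)
    (g : ℝ → ℝ≥0∞) : lqNormOn q s g = eLpNorm g q (volume.restrict s) := by
  unfold lqNormOn
  split_ifs with h
  · rw [h, eLpNorm_top_eq_essSup, essSup_indicator_eq_essSup_restrict hs]
  · rw [eLpNorm_eq_lintegral_rpow hq h]

lemma lpZNorm_eq_eLpNorm {p : ℝ≥0∞} (hp : p ≠ 0) (a : ℤ → ℝ≥0∞) :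
    lpZNorm p a = eLpNorm a p Measure.count := by
  unfold lpZNorm
  split_ifs with h
  · rw [h, eLpNorm_top_eq_essSup, essSup_count]
  · rw [eLpNorm_eq_lintegral_rpow hp h, lintegral_count]

lemma tsum_two_rpow_sub_natCast_mul_ne_top (K : ℤ) {δ : ℝ} (hδ : 0 < δ) :
    ∑' j : ℕ, (2 : ℝ≥0∞) ^ (((K - j : ℤ) : ℝ) * δ) ≠ ∞ := by
  have h_term (j : ℕ) :
      (2 : ℝ≥0∞) ^ (((K - j : ℤ) : ℝ) * δ) = 2 ^ (K * δ) * (2 ^ (-δ)) ^ j := by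
    rw [← ENNReal.rpow_natCast, ← ENNReal.rpow_mul,
      ← ENNReal.rpow_add _ _ two_ne_zero ofNat_ne_top]
    push_cast
    ring_nf
  have h_ratio : (2 : ℝ≥0∞) ^ (-δ) < 1 :=
    ENNReal.rpow_lt_one_of_one_lt_of_neg one_lt_two (neg_lt_zero.2 hδ)
  simp only [h_term, ENNReal.tsum_mul_left, ENNReal.tsum_geometric]
  exact ENNReal.mul_ne_top (ENNReal.rpow_ne_top_of_ne_zero two_ne_zero ofNat_ne_top)
    (ENNReal.inv_ne_top.2 (tsub_pos_of_lt h_ratio).ne')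

section Herz

variable {p q : ℝ≥0∞} {α : ℝ}

lemma herzNorm1_eq_eLpNorm (hp : p ≠ 0) (hq : q ≠ 0) :
    herzNorm1 α p q = fun g => eLpNorm (fun k : ℤ =>
      (2 : ℝ≥0∞) ^ (k * α) * eLpNorm g q (volume.restrict (herzRing k))) p Measure.count := by
  funext g
  simp only [herzNorm1, lpZNorm_eq_eLpNorm hp, lqNormOn_eq_eLpNorm hq (measurableSet_herzRing _),
    ← ENNReal.ofReal_rpow_of_pos two_pos, ofReal_ofNat]

lemma isFunctionNorm_herzNorm1 (hp : 1 ≤ p) (hq : 1 ≤ q) :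
    IsFunctionNorm volume (herzNorm1 α p q) := by
  have h_weighted (k : ℤ) : IsFunctionNorm (volume.restrict (herzRing k)) fun g =>
      (2 : ℝ≥0∞) ^ (k * α) * eLpNorm g q (volume.restrict (herzRing k)) :=
    (isFunctionNorm_eLpNorm hq).const_mul (by simp)
  rw [← sum_restrict_herzRing,
    herzNorm1_eq_eLpNorm (one_pos.trans_le hp).ne' (one_pos.trans_le hq).ne']
  exact (isFunctionNorm_eLpNorm hp).sum h_weighted

lemma herzNorm1_indicator_herzRing_le (hp : p ≠ 0) (hq : q ≠ 0) (k : ℤ) :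
    herzNorm1 α p q ((herzRing k).indicator 1) ≤ 2 ^ (k * (α + q.toReal⁻¹)) := by
  have h_ring : eLpNorm ((herzRing k).indicator (1 : ℝ → ℝ≥0∞)) q (volume.restrict (herzRing k)) ≤
      (2 : ℝ≥0∞) ^ (k * q.toReal⁻¹) := by
    simpa [volume_herzRing, ENNReal.rpow_mul, Pi.one_def] using eLpNorm_indicator_const_le
      (μ := volume.restrict (herzRing k)) (s := herzRing k) (1 : ℝ≥0∞) q
  have h_off {j : ℤ} (hjk : j ≠ k) :
      eLpNorm ((herzRing k).indicator (1 : ℝ → ℝ≥0∞)) q (volume.restrict (herzRing j)) = 0 := by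
    refine eLpNorm_eq_zero_of_ae_zero ?_
    filter_upwards [ae_restrict_mem (measurableSet_herzRing j)] with x hx
    exact Set.indicator_of_notMem (Set.disjoint_left.1 (pairwise_disjoint_herzRing hjk) hx) 1
  calc
    herzNorm1 α p q ((herzRing k).indicator 1)
      ≤ eLpNorm (({k} : Set ℤ).indicator fun _ => (2 : ℝ≥0∞) ^ (k * (α + q.toReal⁻¹))) p
          Measure.count := by
        rw [herzNorm1_eq_eLpNorm hp hq]
        refine eLpNorm_mono_enorm fun j => ?_
        obtain rfl | hjk := eq_or_ne j k
        · simp only [enorm_eq_self, Set.mem_singleton, Set.indicator_of_mem]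
          rw [mul_add, ENNReal.rpow_add _ _ two_ne_zero ofNat_ne_top]
          gcongr
        · simp [h_off hjk]
    _ ≤ 2 ^ (k * (α + q.toReal⁻¹)) := by
        simpa using eLpNorm_indicator_const_le (μ := Measure.count) (s := {k})
          ((2 : ℝ≥0∞) ^ (k * (α + q.toReal⁻¹))) p

lemma setLIntegral_herzRing_le (hp : p ≠ 0) (hq : 1 ≤ q) (k : ℤ) {g : ℝ → ℝ≥0∞}
    (hg : Measurable g) :
    ∫⁻ x in herzRing k, g x ≤ 2 ^ (k * (1 - q.toReal⁻¹ - α)) * herzNorm1 α p q g := by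
  calc
    ∫⁻ x in herzRing k, g x = eLpNorm g 1 (volume.restrict (herzRing k)) := by
      simp [eLpNorm_one_eq_lintegral_enorm]
    _ ≤ eLpNorm g q (volume.restrict (herzRing k)) * 2 ^ (k * (1 - q.toReal⁻¹)) := by
      simpa [volume_herzRing, ENNReal.rpow_mul] using
        eLpNorm_le_eLpNorm_mul_rpow_measure_univ (μ := volume.restrict (herzRing k)) hq
          hg.aestronglyMeasurable
    _ = 2 ^ (k * (1 - q.toReal⁻¹ - α)) *
          (2 ^ (k * α) * eLpNorm g q (volume.restrict (herzRing k))) := by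
      rw [← mul_assoc, ← ENNReal.rpow_add _ _ two_ne_zero ofNat_ne_top, mul_comm]
      ring_nf
    _ ≤ 2 ^ (k * (1 - q.toReal⁻¹ - α)) * herzNorm1 α p q g := by
      gcongr
      rw [herzNorm1_eq_eLpNorm hp (one_pos.trans_le hq).ne']
      exact enorm_le_eLpNorm_count (fun k : ℤ =>
        (2 : ℝ≥0∞) ^ (k * α) * eLpNorm g q (volume.restrict (herzRing k))) k hp

lemma isAdmissibleSet_herzNorm1_Ioo (hp : 1 ≤ p) (hq : 1 ≤ q)
    (hα : -q.toReal⁻¹ < α) (hα' : α < 1 - q.toReal⁻¹) (K : ℤ) :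
    IsAdmissibleSet (herzNorm1 α p q) volume (Set.Ioo (-2 ^ K) (2 ^ K)) := by
  have hp₀ : p ≠ 0 := (one_pos.trans_le hp).ne'
  have hq₀ : q ≠ 0 := (one_pos.trans_le hq).ne'
  refine .of_ae_le_iUnion (isFunctionNorm_herzNorm1 hp hq) (fun j => measurableSet_herzRing _)
    (Ioo_two_zpow_ae_le_iUnion_herzRing K) ?_
    (tsum_two_rpow_sub_natCast_mul_ne_top K (by linarith : 0 < 1 - q.toReal⁻¹ - α))
    fun j f hf => setLIntegral_herzRing_le hp₀ hq _ hf
  exact ne_top_of_le_ne_top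
    (tsum_two_rpow_sub_natCast_mul_ne_top K (by linarith : 0 < α + q.toReal⁻¹))
    (ENNReal.tsum_le_tsum fun j => herzNorm1_indicator_herzRing_le hp₀ hq₀ _)

end Herz

lemma mixedHerzNormE_zero (α : Fin 0 → ℝ) (p q : Fin 0 → ℝ≥0∞) :
    mixedHerzNormE 0 α p q = fun f => f fun i => i.elim0 := rfl

lemma mixedHerzNormE_succ {n : ℕ} (α : Fin (n + 1) → ℝ) (p q : Fin (n + 1) → ℝ≥0∞) :
    mixedHerzNormE (n + 1) α p q = fun f =>
      iteratedNorm (herzNorm1 (α (Fin.last n)) (p (Fin.last n)) (q (Fin.last n)))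
        (mixedHerzNormE n (Fin.init α) (Fin.init p) (Fin.init q))
        (f ∘ (MeasurableEquiv.piFinSuccAbove (fun _ => ℝ) (Fin.last n)).symm) := by
  funext f
  simp only [mixedHerzNormE, iteratedNorm, Function.comp_apply,
    MeasurableEquiv.piFinSuccAbove_symm_apply, Fin.insertNthEquiv, Equiv.coe_fn_mk,
    Fin.insertNth_last']

lemma isFunctionNorm_mixedHerzNormE {n : ℕ} (α : Fin n → ℝ) {p q : Fin n → ℝ≥0∞}
    (hp : ∀ i, 1 ≤ p i) (hq : ∀ i, 1 ≤ q i) :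
    IsFunctionNorm volume (mixedHerzNormE n α p q) := by
  induction n with
  | zero =>
    rw [mixedHerzNormE_zero, volume_pi, Measure.pi_of_empty (x := fun i => i.elim0)]
    exact isFunctionNorm_eval _
  | succ n ih =>
    rw [mixedHerzNormE_succ]
    exact ((isFunctionNorm_herzNorm1 (hp _) (hq _)).iterated
      (ih _ (fun _ => hp _) fun _ => hq _)).comp_measurePreserving
        (volume_preserving_piFinSuccAbove (fun _ => ℝ) (Fin.last n)).symm

lemma isAdmissibleSet_mixedHerzNormE_pi_Ioo {n : ℕ} {α : Fin n → ℝ} {p q : Fin n → ℝ≥0∞}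
    (hp : ∀ i, 1 ≤ p i) (hq : ∀ i, 1 ≤ q i) (hα : ∀ i, -(q i).toReal⁻¹ < α i)
    (hα' : ∀ i, α i < 1 - (q i).toReal⁻¹) (K : ℤ) :
    IsAdmissibleSet (mixedHerzNormE n α p q) volume
      (Set.univ.pi fun _ => Set.Ioo (-2 ^ K) (2 ^ K)) := by
  induction n with
  | zero =>
    rw [mixedHerzNormE_zero, volume_pi, Measure.pi_of_empty (x := fun i => i.elim0)]
    exact isAdmissibleSet_eval _ _
  | succ n ih =>
    rw [mixedHerzNormE_succ]
    refine IsAdmissibleSet.comp_measurePreserving ?_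
      (volume_preserving_piFinSuccAbove (fun _ => ℝ) (Fin.last n)).symm
      (MeasurableSet.univ_pi fun _ => measurableSet_Ioo)
    have h_preimage : (MeasurableEquiv.piFinSuccAbove (fun _ => ℝ) (Fin.last n)).symm ⁻¹'
        (Set.univ.pi fun _ => Set.Ioo (-2 ^ K) (2 ^ K)) =
          Set.Ioo (-2 ^ K) (2 ^ K) ×ˢ Set.univ.pi fun _ => Set.Ioo (-2 ^ K) (2 ^ K) := by
      ext z
      simp [MeasurableEquiv.piFinSuccAbove_symm_apply, Fin.insertNthEquiv, Fin.forall_fin_succ',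
        and_comm]
    rw [h_preimage]
    exact .prod (isFunctionNorm_herzNorm1 (hp _) (hq _))
      (isFunctionNorm_mixedHerzNormE _ (fun _ => hp _) fun _ => hq _)
      (isAdmissibleSet_herzNorm1_Ioo (hp _) (hq _) (hα _) (hα' _) K)
      (ih (fun _ => hp _) (fun _ => hq _) (fun _ => hα _) fun _ => hα' _)
      measurableSet_Ioo (MeasurableSet.univ_pi fun _ => measurableSet_Ioo)

lemma exists_eucBall_subset_pi_Ioo (n : ℕ) (x : Fin n → ℝ) (r : ℝ) :
    ∃ K : ℤ, eucBall n x r ⊆ Set.univ.pi fun _ => Set.Ioo (-2 ^ K) (2 ^ K) := by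
  obtain ⟨K, hK⟩ := pow_unbounded_of_one_lt (∑ i, |x i| + |r|) (one_lt_two (α := ℝ))
  refine ⟨K, fun y hy i _ => abs_lt.1 ?_⟩
  have h_sub : |y i - x i| < |r| := sq_lt_sq.1 <| (Finset.single_le_sum
    (f := fun i => (y i - x i) ^ 2) (fun _ _ => sq_nonneg _) (Finset.mem_univ i)).trans_lt hy
  have h_center : |x i| ≤ ∑ i, |x i| :=
    Finset.single_le_sum (f := fun i => |x i|) (fun _ _ => abs_nonneg _) (Finset.mem_univ i)
  rw [zpow_natCast]
  linarith [abs_sub_abs_le_abs_sub (y i) (x i)]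

/-- `Ė^{α,p}_q(ℝⁿ)` is a ball Banach function space. -/
theorem mixedHerz_isBallBanach (n : ℕ) (p q : Fin n → ℝ≥0∞) (α : Fin n → ℝ)
    (hp : ∀ i, 1 ≤ p i) (hq : ∀ i, 1 ≤ q i)
    (hα : ∀ i, -(1 / q i).toReal < α i ∧ α i < 1 - (1 / q i).toReal) :
    IsBallBanachNorm n (mixedHerzNormE n α p q) := by
  simp only [one_div, toReal_inv] at hα
  have hN : IsFunctionNorm volume (mixedHerzNormE n α p q) := isFunctionNorm_mixedHerzNormE α hp hq
  refine hN.isBallBanachNorm fun x r _ => ?_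
  obtain ⟨K, hK⟩ := exists_eucBall_subset_pi_Ioo n x r
  have h_cube := isAdmissibleSet_mixedHerzNormE_pi_Ioo hp hq (fun i => (hα i).1)
    (fun i => (hα i).2) K
  exact h_cube.subset hN hK
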